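/- Let A be a subset of ℝ⁺. Then A is lower porous at 0 if and only if the union A ∪ B is porous at 0 for every strongly porous at 0 set B ⊆ ℝ⁺. -/

import Mathlib

/-!
Both directions rest on explicit gaps. If `λ(A,h) > c h` for all small `h`, then at every scale `h`
where `B` has a gap filling more than the fraction `1 - c/2` of `(0,h)`, that gap meets the large
gap of `A` in an interval of length at least `(c/2) h`, so `A ∪ B` is porous.

Conversely, if `A` is not lower porous, pick `h n → 0` rapidly with
`λ(A, h n) < h n / (n+2)^2`, and let `B` be the complement in `[0,∞)` of the disjoint intervals
`(h n / (n+2), h n)`. Then `B` is strongly porous. A gap of `A ∪ B` lies below a single `h n`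
and reaches above `h n / (n+2)`, so its length, at most `h n / (n+2)^2`, is
negligible compared with its right end; hence `A ∪ B` is nonporous.
-/

open Filter Set

/-- `gapLength E h` = λ(E,h): the length of the largest open subinterval of (0,h)
containing no point of `E` (0 if no such interval exists). -/
noncomputable def gapLength (E : Set ℝ) (h : ℝ) : ℝ :=
  sSup {l : ℝ | ∃ a b : ℝ, 0 ≤ a ∧ a ≤ b ∧ b ≤ h ∧ Set.Ioo a b ∩ E = ∅ ∧ l = b - a}

/-- The right upper porosity of `E` at 0. -/
noncomputable def upperPorosity (E : Set ℝ) : ℝ :=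
  Filter.limsup (fun h => gapLength E h / h) (nhdsWithin (0:ℝ) (Set.Ioi 0))

/-- The right lower porosity of `E` at 0. -/
noncomputable def lowerPorosity (E : Set ℝ) : ℝ :=
  Filter.liminf (fun h => gapLength E h / h) (nhdsWithin (0:ℝ) (Set.Ioi 0))

/-- `UMP E`: sequences of positive reals tending to 0 along which the upper limit
in the definition of porosity is attained. -/
def UMP (E : Set ℝ) : Set (ℕ → ℝ) :=
  {h | (∀ n, 0 < h n) ∧ Filter.Tendsto h Filter.atTop (nhds 0) ∧
    Filter.Tendsto (fun n => gapLength E (h n) / h n) Filter.atTop (nhds (upperPorosity E))}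

/-- The set of all strongly porous at 0 subsets of ℝ⁺. -/
def SP : Set (Set ℝ) := {E | E ⊆ Set.Ici 0 ∧ upperPorosity E = 1}

/-- `I` is an ideal on the set `X`. -/
def IsIdealOn (X : Set ℝ) (I : Set (Set ℝ)) : Prop :=
  I.Nonempty ∧ (∀ B ∈ I, B ⊆ X) ∧ (∀ B ∈ I, ∀ C : Set ℝ, C ⊆ B → C ∈ I) ∧
    (∀ B ∈ I, ∀ C ∈ I, B ∪ C ∈ I) ∧ X ∉ I

/-- `I` is a `Γ`-maximal ideal on `X`. -/
def IsMaximalIdealIn (X : Set ℝ) (Γ I : Set (Set ℝ)) : Prop :=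
  IsIdealOn X I ∧ I ⊆ Γ ∧ ∀ J : Set (Set ℝ), IsIdealOn X J → I ⊆ J → J ⊆ Γ → I = J

/-- `Î(SP)`: the intersection of all SP-maximal ideals on ℝ⁺. -/
def hatISP : Set (Set ℝ) :=
  {A | ∀ I : Set (Set ℝ), IsMaximalIdealIn (Set.Ici 0) SP I → A ∈ I}

/-- The q-blow up `E(q)` of a set `E ⊆ ℝ⁺`. -/
def blowUp (E : Set ℝ) (q : ℝ) : Set ℝ := ⋃ x ∈ E, Set.Ioo (q⁻¹ * x) (q * x)

lemma gapLength_bddAbove (E : Set ℝ) (h : ℝ) :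
    BddAbove {l : ℝ | ∃ a b : ℝ, 0 ≤ a ∧ a ≤ b ∧ b ≤ h ∧ Set.Ioo a b ∩ E = ∅ ∧ l = b - a} := by
  refine ⟨h, ?_⟩
  rintro l ⟨a, b, h1, h2, h3, -, rfl⟩
  linarith

lemma le_gapLength {E : Set ℝ} {a b h : ℝ} (ha : 0 ≤ a) (hab : a ≤ b) (hb : b ≤ h)
    (hE : ∀ x, a < x → x < b → x ∉ E) : b - a ≤ gapLength E h := by
  refine le_csSup (gapLength_bddAbove E h) ⟨a, b, ha, hab, hb, ?_, rfl⟩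
  ext x
  simp only [mem_inter_iff, mem_Ioo, mem_empty_iff_false, iff_false]
  rintro ⟨⟨h1, h2⟩, h3⟩
  exact hE x h1 h2 h3

lemma gapLength_le {E : Set ℝ} {h c : ℝ} (hh : 0 ≤ h)
    (H : ∀ a b, 0 ≤ a → a ≤ b → b ≤ h → (∀ x, a < x → x < b → x ∉ E) → b - a ≤ c) :
    gapLength E h ≤ c := by
  refine csSup_le ⟨0, 0, 0, le_rfl, le_rfl, hh, by simp, by simp⟩ ?_
  rintro l ⟨a, b, h1, h2, h3, h4, rfl⟩
  refine H a b h1 h2 h3 fun x hx1 hx2 hx => ?_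
  have : x ∈ Ioo a b ∩ E := ⟨⟨hx1, hx2⟩, hx⟩
  rw [h4] at this
  exact this

lemma exists_gap {E : Set ℝ} {h c : ℝ} (hh : 0 ≤ h) (hc : c < gapLength E h) :
    ∃ a b, 0 ≤ a ∧ a ≤ b ∧ b ≤ h ∧ (∀ x, a < x → x < b → x ∉ E) ∧ c < b - a := by
  by_contra hcon
  refine absurd (gapLength_le hh fun a b h1 h2 h3 h4 => ?_) (not_le.2 hc)
  by_contra h5
  exact hcon ⟨a, b, h1, h2, h3, h4, not_le.1 h5⟩

lemma gapLength_nonneg (E : Set ℝ) {h : ℝ} (hh : 0 ≤ h) : 0 ≤ gapLength E h := by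
  have := le_gapLength (E := E) (a := 0) (b := 0) le_rfl le_rfl hh
    fun x h1 h2 => absurd h1 h2.not_gt
  simpa using this

lemma eventually_ratio_nonneg (E : Set ℝ) :
    ∀ᶠ h in nhdsWithin (0:ℝ) (Ioi 0), 0 ≤ gapLength E h / h := by
  filter_upwards [self_mem_nhdsWithin] with h hh
  exact div_nonneg (gapLength_nonneg E (le_of_lt hh)) (le_of_lt hh)

lemma eventually_ratio_le_one (E : Set ℝ) :
    ∀ᶠ h in nhdsWithin (0:ℝ) (Ioi 0), gapLength E h / h ≤ 1 := by
  filter_upwards [self_mem_nhdsWithin] with h hh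
  rw [div_le_one hh]
  exact gapLength_le (le_of_lt hh) fun a b h1 h2 h3 _ => by linarith

lemma le_upperPorosity {E : Set ℝ} {c : ℝ}
    (H : ∃ᶠ h in nhdsWithin (0:ℝ) (Ioi 0), c ≤ gapLength E h / h) : c ≤ upperPorosity E :=
  le_limsup_of_frequently_le H ⟨1, eventually_map.2 (eventually_ratio_le_one E)⟩

lemma upperPorosity_le {E : Set ℝ} {c : ℝ}
    (H : ∀ᶠ h in nhdsWithin (0:ℝ) (Ioi 0), gapLength E h / h ≤ c) : upperPorosity E ≤ c :=
  limsup_le_of_le (IsBoundedUnder.isCoboundedUnder_le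
    ⟨0, eventually_map.2 (eventually_ratio_nonneg E)⟩) H

lemma frequently_lt_of_lt_upperPorosity {E : Set ℝ} {c : ℝ} (hc : c < upperPorosity E) :
    ∃ᶠ h in nhdsWithin (0:ℝ) (Ioi 0), c < gapLength E h / h :=
  frequently_lt_of_lt_limsup (IsBoundedUnder.isCoboundedUnder_le
    ⟨0, eventually_map.2 (eventually_ratio_nonneg E)⟩) hc

lemma eventually_lt_of_lt_lowerPorosity {E : Set ℝ} {c : ℝ} (hc : c < lowerPorosity E) :
    ∀ᶠ h in nhdsWithin (0:ℝ) (Ioi 0), c < gapLength E h / h :=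
  eventually_lt_of_lt_liminf hc ⟨0, eventually_map.2 (eventually_ratio_nonneg E)⟩

lemma frequently_lt_of_lowerPorosity_lt {E : Set ℝ} {c : ℝ} (hc : lowerPorosity E < c) :
    ∃ᶠ h in nhdsWithin (0:ℝ) (Ioi 0), gapLength E h / h < c :=
  frequently_lt_of_liminf_lt (IsBoundedUnder.isCoboundedUnder_ge
    ⟨1, eventually_map.2 (eventually_ratio_le_one E)⟩) hc

/-- A gap filling all but `(c/2) h` of `(0,h)` meets a gap longer than `c h` in an interval longer
than `(c/2) h`. -/
lemma porous_union_of_lowerPorous {A B : Set ℝ} (hA : 0 < lowerPorosity A)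
    (hB : upperPorosity B = 1) : 0 < upperPorosity (A ∪ B) := by
  obtain ⟨c, hc0, hc⟩ := exists_between hA
  have hB' : 1 - c / 2 < upperPorosity B := by rw [hB]; linarith
  refine lt_of_lt_of_le (half_pos hc0) (le_upperPorosity ?_)
  refine ((frequently_lt_of_lt_upperPorosity hB').and_eventually
    ((eventually_lt_of_lt_lowerPorosity hc).and self_mem_nhdsWithin)).mono ?_
  rintro h ⟨h1, h2, hh⟩
  have hh : 0 < h := hh
  rw [lt_div_iff₀ hh] at h1 h2
  obtain ⟨a, b, ha, hab, hb, hgB, hlB⟩ := exists_gap hh.le h1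
  obtain ⟨a', b', ha', hab', hb', hgA, hlA⟩ := exists_gap hh.le h2
  rw [le_div_iff₀ hh]
  have hch : 0 < c * h := mul_pos hc0 hh
  have key : c / 2 * h ≤ min b b' - max a a' := by
    rcases min_cases b b' with ⟨e, _⟩ | ⟨e, _⟩ <;>
      rcases max_cases a a' with ⟨e', _⟩ | ⟨e', _⟩ <;> rw [e, e'] <;> nlinarith
  refine key.trans (le_gapLength (ha.trans (le_max_left _ _)) (by linarith)
    ((min_le_left _ _).trans hb) fun x hx1 hx2 hx => ?_)
  rw [max_lt_iff] at hx1
  rw [lt_min_iff] at hx2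
  rcases hx with hx | hx
  · exact hgA x hx1.2 hx2.2 hx
  · exact hgB x hx1.1 hx2.1 hx

/-- If `A` is not lower porous, there is a rapidly decreasing sequence of scales at which the gaps
of `A` are negligible. -/
lemma exists_scales {A : Set ℝ} (hA : lowerPorosity A ≤ 0) :
    ∃ h : ℕ → ℝ, (∀ n, 0 < h n) ∧ (∀ n, h n < 1 / ((n : ℝ) + 1)) ∧
      (∀ n : ℕ, h (n + 1) < h n / ((n : ℝ) + 2)) ∧
      ∀ n : ℕ, gapLength A (h n) < h n / ((n : ℝ) + 2) ^ 2 := by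
  have step : ∀ (n : ℕ) (δ : ℝ), ∃ x, 0 < δ →
      0 < x ∧ x < δ ∧ gapLength A x < x / ((n : ℝ) + 2) ^ 2 := by
    intro n δ
    by_cases hδ : 0 < δ
    · have hlt : lowerPorosity A < 1 / ((n : ℝ) + 2) ^ 2 := lt_of_le_of_lt hA (by positivity)
      obtain ⟨x, hx1, hx0, hx2⟩ := ((frequently_lt_of_lowerPorosity_lt hlt).and_eventually
        (Ioo_mem_nhdsGT hδ)).exists
      refine ⟨x, fun _ => ⟨hx0, hx2, ?_⟩⟩
      rw [div_lt_iff₀ hx0] at hx1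
      rwa [one_div_mul_eq_div] at hx1
    · exact ⟨0, fun h => absurd h hδ⟩
  choose f hf using step
  let h : ℕ → ℝ := fun n => Nat.rec (f 0 1)
    (fun n y => f (n + 1) (min (y / ((n : ℝ) + 2)) (1 / ((n : ℝ) + 2)))) n
  have hs : ∀ n : ℕ, h (n + 1) = f (n + 1) (min (h n / ((n : ℝ) + 2)) (1 / ((n : ℝ) + 2))) :=
    fun n => rfl
  have hpos : ∀ n, 0 < h n := by
    intro n
    induction n with
    | zero => exact (hf 0 1 one_pos).1
    | succ n ih => rw [hs]; exact (hf _ _ (lt_min (by positivity) (by positivity))).1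
  have hsucc : ∀ n : ℕ, _ := fun n : ℕ => hf (n + 1) (min (h n / ((n : ℝ) + 2)) (1 / ((n : ℝ) + 2)))
    (lt_min (div_pos (hpos n) (by positivity)) (by positivity))
  refine ⟨h, hpos, ?_, ?_, ?_⟩
  · rintro (_ | n)
    · have h0 : h 0 < 1 := (hf 0 1 one_pos).2.1
      simpa using h0
    · have := (lt_min_iff.1 (hsucc n).2.1).2
      rw [hs]
      push_cast
      rwa [add_assoc, one_add_one_eq_two]
  · intro n
    rw [hs]
    exact (lt_min_iff.1 (hsucc n).2.1).1
  · rintro (_ | n)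
    · exact (hf 0 1 one_pos).2.2
    · rw [hs]
      exact (hsucc n).2.2

/-- The witness removes from `[0,∞)` the intervals `(h n / (n+2), h n)` just below the scales `h n` of
`exists_scales`. -/
lemma exists_stronglyPorous_union_nonporous {A : Set ℝ} (hA : lowerPorosity A ≤ 0) :
    ∃ B : Set ℝ, B ⊆ Ici 0 ∧ upperPorosity B = 1 ∧ upperPorosity (A ∪ B) ≤ 0 := by
  obtain ⟨h, hpos, hlt, hdec, hgap⟩ := exists_scales hA
  have hanti : Antitone h := antitone_nat_of_succ_le fun n =>
    (hdec n).le.trans (div_le_self (hpos n).le (by linarith [n.cast_nonneg (α := ℝ)]))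
  have hdisj : ∀ k n : ℕ, k < n → h n < h k / ((k : ℝ) + 2) := fun k n hkn =>
    (hanti (Nat.succ_le_of_lt hkn)).trans_lt (hdec k)
  have hone : Tendsto (fun n : ℕ => 1 / ((n : ℝ) + 1)) atTop (nhds 0) :=
    tendsto_one_div_add_atTop_nhds_zero_nat
  have htend : Tendsto h atTop (nhdsWithin (0:ℝ) (Ioi 0)) :=
    tendsto_nhdsWithin_iff.2 ⟨squeeze_zero (fun n => (hpos n).le) (fun n => (hlt n).le) hone,
      Eventually.of_forall hpos⟩
  refine ⟨{x | 0 ≤ x ∧ ∀ n : ℕ, ¬ (h n / ((n : ℝ) + 2) < x ∧ x < h n)}, fun x hx => hx.1, ?_, ?_⟩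
  · refine le_antisymm (upperPorosity_le (eventually_ratio_le_one _)) ?_
    refine le_of_forall_lt fun c hc => ?_
    obtain ⟨d, hcd, hd⟩ := exists_between hc
    refine hcd.trans_le (le_upperPorosity (htend.frequently (Eventually.frequently ?_)))
    filter_upwards [hone.eventually (gt_mem_nhds (sub_pos.2 hd))] with n hn
    rw [le_div_iff₀ (hpos n)]
    have h2 : (1:ℝ) / ((n : ℝ) + 2) ≤ 1 / ((n : ℝ) + 1) := by gcongr; norm_num
    refine le_trans ?_ (le_gapLength (a := h n / ((n : ℝ) + 2)) (b := h n)
      (div_nonneg (hpos n).le (by positivity))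
      (div_le_self (hpos n).le (by linarith [n.cast_nonneg (α := ℝ)])) le_rfl
      fun x hx1 hx2 hx => hx.2 n ⟨hx1, hx2⟩)
    rw [div_eq_mul_one_div (h n)]
    nlinarith [hpos n]
  · refine le_of_forall_pos_le_add fun ε hε => ?_
    rw [zero_add]
    obtain ⟨N, hN⟩ := (hone.eventually (gt_mem_nhds hε)).exists
    have hsN : 0 < h N / ((N : ℝ) + 2) := div_pos (hpos N) (by positivity)
    refine upperPorosity_le ?_
    filter_upwards [Ioo_mem_nhdsGT hsN] with t ht
    rw [div_le_iff₀ ht.1]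
    refine gapLength_le ht.1.le fun a b ha hab hbt hg => ?_
    rcases hab.eq_or_lt with rfl | hab
    · rw [sub_self]; exact (mul_pos hε ht.1).le
    have hm := hg ((a + b) / 2) (by linarith) (by linarith)
    simp only [mem_union, mem_ofPred_eq, not_or, not_and, not_forall, not_not] at hm
    obtain ⟨n, hn1, hn2⟩ := hm.2 (by linarith)
    -- The right end `h n` lies in `B`, so the gap cannot extend beyond it.
    have hbn : b ≤ h n := by
      by_contra hcon
      refine hg (h n) (by linarith) (not_le.1 hcon) (Or.inr ⟨(hpos n).le, fun k hk => ?_⟩)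
      rcases lt_or_ge k n with hkn | hkn
      · exact (hdisj k n hkn).not_gt hk.1
      · exact (hanti hkn).not_gt hk.2
    -- The gap reaches above `h n / (n+2)` but stays below `t < h N / (N+2)`.
    have hNn : N < n := by
      by_contra hcon
      have hst : h N / ((N : ℝ) + 2) ≤ h n / ((n : ℝ) + 2) := by
        have hnN : n ≤ N := not_lt.1 hcon
        have : (n : ℝ) ≤ N := by exact_mod_cast hnN
        exact div_le_div₀ (hpos n).le (hanti hnN) (by positivity) (by linarith)
      linarith [ht.2]
    have hlen : b - a ≤ gapLength A (h n) :=
      le_gapLength ha hab.le hbn fun x hx1 hx2 hx => hg x hx1 hx2 (Or.inl hx)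
    have hε' : 1 / ((n : ℝ) + 2) ≤ ε := by
      refine le_trans ?_ hN.le
      have : (N : ℝ) < n := by exact_mod_cast hNn
      exact one_div_le_one_div_of_le (by positivity) (by linarith)
    have hfac : h n / ((n : ℝ) + 2) ^ 2 = 1 / ((n : ℝ) + 2) * (h n / ((n : ℝ) + 2)) := by
      field_simp
    calc b - a ≤ 1 / ((n : ℝ) + 2) * (h n / ((n : ℝ) + 2)) := by
          rw [← hfac]; exact hlen.trans (hgap n).le
      _ ≤ ε * t := mul_le_mul hε' (by linarith)
          (div_nonneg (hpos n).le (by positivity)) hε.le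

theorem stmt19 (A : Set ℝ) (hA : A ⊆ Set.Ici 0) :
    0 < lowerPorosity A ↔
      ∀ B : Set ℝ, B ⊆ Set.Ici 0 → upperPorosity B = 1 → 0 < upperPorosity (A ∪ B) := by
  refine ⟨fun h B _ hB => porous_union_of_lowerPorous h hB, fun H => ?_⟩
  by_contra hcon
  obtain ⟨B, hB0, hB, hAB⟩ := exists_stronglyPorous_union_nonporous (not_lt.1 hcon)
  exact (H B hB0 hB).not_ge hAB
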